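/- Let f : ℝ → ℝ be continuous, non-negative, and integrable, and define F(x) := ∫_ℝ (−(1/2)·sgn(x−y)·e^{−|x−y|}) f(y) dy. If there exist a, b ∈ ℝ with a < b such that f(x) = 0 for all x ∈ (a,b) and F(a) = F(b), then f(x) = 0 for all x ∈ ℝ. -/

import Mathlib

open MeasureTheory

lemma aux_meas_sign : Measurable Real.sign := by
  have : Real.sign = fun r : ℝ => if r < 0 then (-1:ℝ) else if 0 < r then 1 else 0 := by
    funext r; rfl
  rw [this]
  refine Measurable.ite measurableSet_Iio measurable_const ?_
  exact Measurable.ite measurableSet_Ioi measurable_const measurable_const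

lemma aux_int (f : ℝ → ℝ) (hf_int : Integrable f) (x : ℝ) :
    Integrable (fun y => (-(1/2) * Real.sign (x - y) * Real.exp (-|x - y|)) * f y) := by
  refine Integrable.bdd_mul (c := 1) hf_int ?_ ?_
  · have h1 : Measurable (fun y : ℝ => Real.sign (x - y)) :=
      aux_meas_sign.comp (measurable_const.sub measurable_id)
    have h2 : Measurable (fun y : ℝ => Real.exp (-|x - y|)) := by fun_prop
    exact ((h1.const_mul _).mul h2).aestronglyMeasurable
  · refine Filter.Eventually.of_forall fun y => ?_
    have h1 : Real.exp (-|x - y|) ≤ 1 := Real.exp_le_one_iff.2 (by simp)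
    have h2 := Real.exp_pos (-|x - y|)
    rw [Real.norm_eq_abs, abs_le]
    rcases Real.sign_apply_eq (x - y) with h | h | h <;> rw [h] <;> constructor <;> nlinarith

/-- **Theorem 3.2 (non-periodic case).** Let `f` be continuous, non-negative and integrable,
and `F(x) = ∫ g'(x-y) f(y) dy` with `g'(x) = -(1/2)sgn(x)e^{-|x|}`. If `f` vanishes on some
interval `(a,b)` and `F(a) = F(b)`, then `f` vanishes identically. -/
theorem ch2_theorem32_line
    (f : ℝ → ℝ) (hf_cont : Continuous f) (hf_nonneg : ∀ x, 0 ≤ f x)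
    (hf_int : Integrable f)
    (F : ℝ → ℝ)
    (hF : ∀ x, F x = ∫ y, (-(1/2) * Real.sign (x - y) * Real.exp (-|x - y|)) * f y)
    (a b : ℝ) (hab : a < b)
    (hvan : ∀ x ∈ Set.Ioo a b, f x = 0)
    (hFab : F a = F b) :
    ∀ x : ℝ, f x = 0 := by
  have hcl : ∀ x ∈ Set.Icc a b, f x = 0 := by
    intro x hx
    rw [← closure_Ioo hab.ne] at hx
    exact closure_minimal (t := {x | f x = 0}) hvan (isClosed_eq hf_cont continuous_const) hx
  have key : ∀ y, y ∉ Set.Icc a b →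
      0 < -(1/2) * Real.sign (b - y) * Real.exp (-|b - y|)
        - -(1/2) * Real.sign (a - y) * Real.exp (-|a - y|) := by
    intro y hy
    rw [Set.mem_Icc, not_and_or, not_le, not_le] at hy
    rcases hy with hy | hy
    · rw [Real.sign_of_pos (by linarith), Real.sign_of_pos (by linarith),
        abs_of_pos (by linarith), abs_of_pos (by linarith)]
      have := Real.exp_lt_exp.2 (show -(b - y) < -(a - y) by linarith)
      linarith
    · rw [Real.sign_of_neg (by linarith), Real.sign_of_neg (by linarith),
        abs_of_neg (by linarith), abs_of_neg (by linarith)]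
      have := Real.exp_lt_exp.2 (show - -(a - y) < - -(b - y) by linarith)
      linarith
  have hI := integral_sub (aux_int f hf_int b) (aux_int f hf_int a)
  rw [← hF, ← hF, hFab, sub_self, integral_eq_zero_iff_of_nonneg] at hI
  · have h0 : f =ᵐ[volume] fun _ => (0:ℝ) := by
      filter_upwards [hI] with y hy
      by_cases hm : y ∈ Set.Icc a b
      · exact hcl y hm
      · have hk := key y hm
        simp only [Pi.zero_apply, ← sub_mul] at hy
        exact (mul_eq_zero.1 hy).resolve_left hk.ne'
    have := (hf_cont.ae_eq_iff_eq volume continuous_const).1 h0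
    exact fun x => congrFun this x
  · intro y
    by_cases hm : y ∈ Set.Icc a b
    · simp [hcl y hm]
    · simp only [Pi.zero_apply, ← sub_mul]
      exact mul_nonneg (key y hm).le (hf_nonneg y)
  · exact (aux_int f hf_int b).sub (aux_int f hf_int a)
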